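/- If |γ| ≤ S(ε_c), then z = 0 is a minimizer over ℝ of the function G. -/

import Mathlib

open Finset Filter

noncomputable section

/-- The sign of a real number, with the convention `sgn 0 = 1`. -/
def sgn (t : ℝ) : ℝ := if t < 0 then -1 else 1

/-- A permutation sorting the absolute values of `β` in nonincreasing order. -/
def sortPerm {p : ℕ} (β : Fin p → ℝ) : Equiv.Perm (Fin p) :=
  (Fin.revPerm).trans (Tuple.sort fun j => |β j|)

/-- The sorted ℓ₁ norm `J(β) = Σ_j λ_j |β|_(j)`. -/
def sortedL1 {p : ℕ} (lam β : Fin p → ℝ) : ℝ :=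
  ∑ j, lam j * |β (sortPerm β j)|

/-- `β(z)`: the vector obtained from `β` by replacing entries of the cluster
`{i : |β i| = ck}` by `sign(β i) * z`. -/
def cupd {p : ℕ} (β : Fin p → ℝ) (ck z : ℝ) : Fin p → ℝ :=
  fun i => if |β i| = ck then sgn (β i) * z else β i

/-- The partial sorted ℓ₁ norm `H(z) = J(β(z))`. -/
def Hfun {p : ℕ} (lam β : Fin p → ℝ) (ck : ℝ) (z : ℝ) : ℝ :=
  sortedL1 lam (cupd β ck z)

/-- `S(w) = Σ_{j ∈ C(w)} λ_{(j)⁻_w}`, where `C(w) = {j : |β(w)_j| = |w|}`. -/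
def Sval {p : ℕ} (lam β : Fin p → ℝ) (ck : ℝ) (w : ℝ) : ℝ :=
  ∑ j, if |cupd β ck w j| = |w| then lam ((sortPerm (cupd β ck w))⁻¹ j) else 0

/-- squared Euclidean norm -/
def sqnorm {n : ℕ} (v : Fin n → ℝ) : ℝ := ∑ i, (v i) ^ 2

/-- `G(z) = (1/2)‖y − Xβ(z)‖² + H(z)`. -/
def Gfun {n p : ℕ} (lam : Fin p → ℝ) (X : Matrix (Fin n) (Fin p) ℝ) (y : Fin n → ℝ)
    (β : Fin p → ℝ) (ck : ℝ) (z : ℝ) : ℝ :=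
  (1/2) * sqnorm (fun i => y i - ∑ j, X i j * cupd β ck z j) + Hfun lam β ck z

/-- `x̃ = Σ_{j ∈ C_k} sign(β_j) X_{:j}`. -/
def xtil {n p : ℕ} (X : Matrix (Fin n) (Fin p) ℝ) (β : Fin p → ℝ) (ck : ℝ) : Fin n → ℝ :=
  fun i => ∑ j, if |β j| = ck then sgn (β j) * X i j else 0

/-- `γ = c_k ω + x̃ᵀ r` where `r = y − Xβ` and `ω = ‖x̃‖²`. -/
def gam {n p : ℕ} (X : Matrix (Fin n) (Fin p) ℝ) (y : Fin n → ℝ) (β : Fin p → ℝ) (ck : ℝ) : ℝ :=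
  ck * sqnorm (xtil X β ck) + ∑ i, xtil X β ck i * (y i - ∑ j, X i j * β j)

end

lemma abs_sgn (t : ℝ) : |sgn t| = 1 := by
  unfold sgn; split_ifs <;> simp

lemma sgn_mul_abs (t : ℝ) : sgn t * |t| = t := by
  unfold sgn
  split_ifs with h
  · rw [abs_of_neg h]; ring
  · rw [abs_of_nonneg (not_lt.mp h)]; ring

lemma antitone_abs_comp_sortPerm {p : ℕ} (β : Fin p → ℝ) :
    Antitone fun j => |β (sortPerm β j)| := fun _ _ hij =>
  Tuple.monotone_sort (fun j => |β j|) (Fin.rev_le_rev.mpr hij)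

/-- Rearrangement inequality: the pairing of `lam` with `v ∘ τ` is largest when `τ` sorts `v`. -/
lemma sum_mul_comp_perm_le_of_antitone {p : ℕ} {lam v : Fin p → ℝ} (hlam : Antitone lam)
    {σ : Equiv.Perm (Fin p)} (hσ : Antitone fun j => v (σ j)) (τ : Equiv.Perm (Fin p)) :
    ∑ j, lam j * v (τ j) ≤ ∑ j, lam j * v (σ j) := by
  have h := (hlam.monovary hσ).sum_mul_comp_perm_le_sum_mul (σ := τ.trans σ.symm)
  simpa using h

lemma sum_mul_abs_perm_le_sortedL1 {p : ℕ} {lam : Fin p → ℝ} (hlam : Antitone lam)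
    (v : Fin p → ℝ) (τ : Equiv.Perm (Fin p)) :
    ∑ j, lam j * |v (τ j)| ≤ sortedL1 lam v :=
  sum_mul_comp_perm_le_of_antitone (v := fun j => |v j|) hlam (antitone_abs_comp_sortPerm v) τ

lemma sortedL1_le_of_antitone {p : ℕ} {lam v : Fin p → ℝ} (hlam : Antitone lam)
    {τ : Equiv.Perm (Fin p)} (hτ : Antitone fun j => |v (τ j)|) :
    sortedL1 lam v ≤ ∑ j, lam j * |v (τ j)| :=
  sum_mul_comp_perm_le_of_antitone (v := fun j => |v j|) hlam hτ (sortPerm v)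

lemma abs_cupd {p : ℕ} (β : Fin p → ℝ) (ck z : ℝ) (j : Fin p) :
    |cupd β ck z j| = if |β j| = ck then |z| else |β j| := by
  unfold cupd
  split_ifs <;> simp [abs_mul, abs_sgn]

/-- A permutation sorting `β(ε)` also sorts `β(0)` when `ε` lies below all nonzero `|β j|`. -/
lemma antitone_abs_cupd_zero {p : ℕ} {β : Fin p → ℝ} {ck ε : ℝ} (hε : 0 < ε)
    (hβ : ∀ j, |β j| ≠ 0 → ε < |β j|) :
    Antitone fun j => |cupd β ck 0 (sortPerm (cupd β ck ε) j)| := by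
  have hφ : ∀ j, |cupd β ck 0 j| = if |cupd β ck ε j| ≤ ε then 0 else |cupd β ck ε j| := by
    intro j
    rw [abs_cupd, abs_cupd, abs_of_pos hε, abs_zero]
    by_cases h : |β j| = ck
    · simp [h]
    · by_cases h0 : |β j| = 0
      · rw [if_neg h, if_neg h, h0, if_pos hε.le]
      · simp only [h, if_false, (hβ j h0).not_ge]
  intro i j hij
  have h := antitone_abs_comp_sortPerm (cupd β ck ε) hij
  simp only [hφ] at h ⊢
  split_ifs <;> first | exact le_rfl | exact abs_nonneg _ | linarith

/-- `H` grows from `0` at least at rate `S(ε)`. -/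
lemma Hfun_zero_add_le {p : ℕ} {lam β : Fin p → ℝ} {ck ε : ℝ} (hlam : Antitone lam)
    (hε : 0 < ε) (hβ : ∀ j, |β j| ≠ 0 → ε < |β j|) (w : ℝ) :
    Hfun lam β ck 0 + |w| * Sval lam β ck ε ≤ Hfun lam β ck w := by
  have h0 := sortedL1_le_of_antitone hlam (antitone_abs_cupd_zero (ck := ck) hε hβ)
  have hw := sum_mul_abs_perm_le_sortedL1 hlam (cupd β ck w) (sortPerm (cupd β ck ε))
  have hS : Sval lam β ck ε = ∑ j, lam j * (if |β (sortPerm (cupd β ck ε) j)| = ck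
      then 1 else 0) := by
    unfold Sval
    rw [← Equiv.sum_comp (sortPerm (cupd β ck ε))]
    refine Finset.sum_congr rfl fun j _ => ?_
    rw [abs_cupd, abs_of_pos hε]
    by_cases h : |β (sortPerm (cupd β ck ε) j)| = ck
    · simp [h]
    · have hne : |β (sortPerm (cupd β ck ε) j)| ≠ ε := by
        intro he
        exact absurd (hβ _ (he ▸ hε.ne')) (by rw [he]; exact lt_irrefl _)
      simp [h, hne]
  have hsplit : ∑ j, lam j * |cupd β ck w (sortPerm (cupd β ck ε) j)| =
      ∑ j, lam j * |cupd β ck 0 (sortPerm (cupd β ck ε) j)| + |w| * Sval lam β ck ε := by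
    rw [hS, Finset.mul_sum, ← Finset.sum_add_distrib]
    refine Finset.sum_congr rfl fun j _ => ?_
    rw [abs_cupd, abs_cupd]
    split_ifs <;> simp [mul_comm]
  unfold Hfun
  linarith

lemma sum_mul_cupd {n p : ℕ} (X : Matrix (Fin n) (Fin p) ℝ) (β : Fin p → ℝ) (ck z : ℝ)
    (i : Fin n) :
    ∑ j, X i j * cupd β ck z j = ∑ j, X i j * β j + (z - ck) * xtil X β ck i := by
  unfold xtil cupd
  rw [Finset.mul_sum, ← Finset.sum_add_distrib]
  refine Finset.sum_congr rfl fun j _ => ?_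
  split_ifs with h
  · have hj := sgn_mul_abs (β j)
    rw [h] at hj
    linear_combination (X i j) * hj
  · ring

lemma sqnorm_residual_cupd {n p : ℕ} (X : Matrix (Fin n) (Fin p) ℝ) (y : Fin n → ℝ)
    (β : Fin p → ℝ) (ck w : ℝ) :
    sqnorm (fun i => y i - ∑ j, X i j * cupd β ck w j) =
      sqnorm (fun i => y i - ∑ j, X i j * cupd β ck 0 j) - 2 * w * gam X y β ck
        + w ^ 2 * sqnorm (xtil X β ck) := by
  simp only [sum_mul_cupd, gam, sqnorm]
  rw [mul_add, ← mul_assoc, Finset.mul_sum, Finset.mul_sum, Finset.mul_sum,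
    ← Finset.sum_add_distrib, ← Finset.sum_sub_distrib, ← Finset.sum_add_distrib]
  refine Finset.sum_congr rfl fun i _ => ?_
  ring

/-- if `|γ| ≤ S(ε_c)`, then `z = 0` minimizes `G` over ℝ. -/
theorem zero_minimizes_G
    {n p m : ℕ} (hn : 0 < n) (hp : 0 < p) (hm : 0 < m)
    (lam : Fin p → ℝ)
    (hlam_mono : ∀ i j : Fin p, i ≤ j → lam j ≤ lam i)
    (hlam_nonneg : ∀ j, 0 ≤ lam j)
    (β : Fin p → ℝ) (c : Fin m → ℝ)
    (hc_anti : StrictAnti c) (hc_nonneg : ∀ i, 0 ≤ c i)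
    (h_attain : ∀ i, ∃ j, |β j| = c i)
    (h_cover : ∀ j, ∃ i, |β j| = c i)
    (k : Fin m)
    (ε : ℝ) (hε_pos : 0 < ε)
    (hε_sep : ∀ i j, i ≠ j → ε < |c i - c j|)
    (hε_min : ∀ i, c i ≠ 0 → ε < c i)
    (X : Matrix (Fin n) (Fin p) ℝ) (y : Fin n → ℝ)
    (hγ : |gam X y β (c k)| ≤ Sval lam β (c k) ε) :
    ∀ w : ℝ, Gfun lam X y β (c k) 0 ≤ Gfun lam X y β (c k) w := by
  intro w
  have hβ : ∀ j, |β j| ≠ 0 → ε < |β j| := by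
    intro j hj
    obtain ⟨i, hi⟩ := h_cover j
    rw [hi] at hj ⊢
    exact hε_min i hj
  have hlam : Antitone lam := fun i j hij => hlam_mono i j hij
  have hH := Hfun_zero_add_le (ck := c k) hlam hε_pos hβ w
  have hω : 0 ≤ w ^ 2 * sqnorm (xtil X β (c k)) :=
    mul_nonneg (sq_nonneg w) (Finset.sum_nonneg fun i _ => sq_nonneg _)
  have hγw : w * gam X y β (c k) ≤ |w| * Sval lam β (c k) ε :=
    (le_abs_self _).trans (by rw [abs_mul]; gcongr)
  unfold Gfun
  rw [sqnorm_residual_cupd X y β (c k) w]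
  linarith
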